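/- Let W be a graphon, n ≥ k ≥ 1 integers, δ > 0, and P an equipartition of {1,…,n} into k parts. Then (log₂ N̂_□(n,δ;W)) / n² ≤ (1/2)·Ent(E[W|P]) + (1/2)·h̃(4k²δ) + 2k²·(log₂ n)/n². -/

import Mathlib

open MeasureTheory Set Filter

noncomputable section

/-- A graphon: a symmetric measurable function `ℝ → ℝ → ℝ` with values in `[0,1]`
(only its values on `[0,1]²` matter). -/
def IsGraphon (W : ℝ → ℝ → ℝ) : Prop :=
  (∀ x y, W x y = W y x) ∧ Measurable (Function.uncurry W) ∧
    ∀ x y, W x y ∈ Set.Icc (0 : ℝ) 1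

/-- The cut norm `‖U‖_□`, the supremum over measurable `S, T ⊆ [0,1]` of
`|∫_{S×T} U|`. -/
def cutNorm (U : ℝ → ℝ → ℝ) : ℝ :=
  sSup { r : ℝ | ∃ S T : Set ℝ, MeasurableSet S ∧ MeasurableSet T ∧
    S ⊆ Set.Icc 0 1 ∧ T ⊆ Set.Icc 0 1 ∧
    r = |∫ p in S ×ˢ T, U p.1 p.2| }

/-- `d_□(W₁, W₂) = ‖W₁ - W₂‖_□`. -/
def dCut (W₁ W₂ : ℝ → ℝ → ℝ) : ℝ := cutNorm (fun x y => W₁ x y - W₂ x y)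

/-- A Lebesgue-measure-preserving map `[0,1] → [0,1]`. -/
def IsMPSelf (σ : ℝ → ℝ) : Prop :=
  MeasureTheory.MeasurePreserving σ
      (MeasureTheory.volume.restrict (Set.Icc (0:ℝ) 1))
      (MeasureTheory.volume.restrict (Set.Icc (0:ℝ) 1)) ∧
    Set.MapsTo σ (Set.Icc (0:ℝ) 1) (Set.Icc (0:ℝ) 1)

/-- The cut distance `δ_□(W₁, W₂)`. -/
def deltaCut (W₁ W₂ : ℝ → ℝ → ℝ) : ℝ :=
  sInf { r : ℝ | ∃ σ₁ σ₂ : ℝ → ℝ, IsMPSelf σ₁ ∧ IsMPSelf σ₂ ∧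
    r = cutNorm (fun x y => W₁ (σ₁ x) (σ₁ y) - W₂ (σ₂ x) (σ₂ y)) }

/-- The binary entropy function `h` (base-2 logarithm; `logb 2 0 = 0` by convention,
so `h 0 = h 1 = 0`). -/
def binEnt (x : ℝ) : ℝ := -x * Real.logb 2 x - (1 - x) * Real.logb 2 (1 - x)

/-- `h̃ x = h (min x (1/2))`. -/
def htilde (x : ℝ) : ℝ := binEnt (min x (1/2))

/-- The entropy `Ent(W) = ∫₀¹∫₀¹ h(W(x,y)) dx dy` of a graphon. -/
def graphonEnt (W : ℝ → ℝ → ℝ) : ℝ :=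
  ∫ x in Set.Icc (0:ℝ) 1, ∫ y in Set.Icc (0:ℝ) 1, binEnt (W x y)

open Classical in
/-- The graphon `W_G` of a simple graph `G` on `{1, …, n}` (vertices as `Fin n`,
vertex `i : Fin n` representing `i+1`): `W_G x y = 1` iff `⌈nx⌉⌈ny⌉ ∈ E(G)`. -/
def graphonOfGraph {n : ℕ} (G : SimpleGraph (Fin n)) : ℝ → ℝ → ℝ := fun x y =>
  if ∃ i j : Fin n, G.Adj i j ∧ ⌈(n : ℝ) * x⌉ = ((i : ℕ) : ℤ) + 1 ∧
      ⌈(n : ℝ) * y⌉ = ((j : ℕ) : ℤ) + 1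
  then 1 else 0

/-- A labelled graph class: a set of graphs on `{1,…,n}` for each `n`. -/
abbrev GraphClass := ∀ n : ℕ, Set (SimpleGraph (Fin n))

/-- A graph class is closed under relabelling by permutations. -/
def IsGraphClass (Q : GraphClass) : Prop :=
  ∀ (n : ℕ) (π : Equiv.Perm (Fin n)) (G : SimpleGraph (Fin n)),
    G ∈ Q n → G.comap ⇑π ∈ Q n

/-- A hereditary graph class: a graph class closed under taking induced subgraphs
(relabelled by the order-preserving bijection). -/
def IsHereditary (Q : GraphClass) : Prop :=
  IsGraphClass Q ∧
    ∀ (m n : ℕ) (f : Fin m → Fin n), StrictMono f →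
      ∀ G ∈ Q n, G.comap f ∈ Q m

/-- `Q̂`: the set of graphons which are limits (in cut distance) of sequences of graphs in
the class `Q` whose orders tend to infinity. -/
def limitSet (Q : GraphClass) : Set (ℝ → ℝ → ℝ) :=
  { W | IsGraphon W ∧
    ∃ (nk : ℕ → ℕ) (Gk : ∀ k, SimpleGraph (Fin (nk k))),
      (∀ k, Gk k ∈ Q (nk k)) ∧ Filter.Tendsto nk Filter.atTop Filter.atTop ∧
      Filter.Tendsto (fun k => deltaCut (graphonOfGraph (Gk k)) W) Filter.atTop (nhds 0) }

/-- `C(n,2) = n(n-1)/2` as a real number. -/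
def choose2 (n : ℕ) : ℝ := (n : ℝ) * ((n : ℝ) - 1) / 2

open Classical in
/-- The step function `E[W | P]` obtained by averaging `W` over the products of the
parts of the partition `P` of `[0,1]`. -/
def condExpPart {k : ℕ} (P : Fin k → Set ℝ) (W : ℝ → ℝ → ℝ) : ℝ → ℝ → ℝ := fun x y =>
  ∑ i : Fin k, ∑ j : Fin k,
    if x ∈ P i ∧ y ∈ P j then ⨍ p in (P i) ×ˢ (P j), W p.1 p.2 else 0

/-- `W̄_n`: the step function of `W` for the partition of `[0,1]` into `n` consecutive
intervals of length `1/n`. -/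
def barStep (n : ℕ) (W : ℝ → ℝ → ℝ) : ℝ → ℝ → ℝ :=
  condExpPart (fun i : Fin n => Set.Ioc (((i : ℕ) : ℝ)/n) ((((i : ℕ) : ℝ) + 1)/n)) W

/-- `N̂_□(n, δ; W)`: the number of graphs `G` on `{1,…,n}` with `d_□(W_G, W) ≤ δ`. -/
def NhatCut (n : ℕ) (δ : ℝ) (W : ℝ → ℝ → ℝ) : ℕ :=
  Nat.card {G : SimpleGraph (Fin n) // dCut (graphonOfGraph G) W ≤ δ}

/-- `N_□(n, δ; W)`: the number of graphs `G` on `{1,…,n}` with `δ_□(W_G, W) ≤ δ`. -/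
def NCut (n : ℕ) (δ : ℝ) (W : ℝ → ℝ → ℝ) : ℕ :=
  Nat.card {G : SimpleGraph (Fin n) // deltaCut (graphonOfGraph G) W ≤ δ}

open Classical in
/-- The induced density `p(F; W)` of a graph `F` on `{1,…,k}` in a graphon `W`. -/
def inducedDensity {k : ℕ} (F : SimpleGraph (Fin k)) (W : ℝ → ℝ → ℝ) : ℝ :=
  ∫ x : Fin k → ℝ in Set.univ.pi (fun _ : Fin k => Set.Icc (0:ℝ) 1),
    ∏ i : Fin k, ∏ j : Fin k,
      if i < j then (if F.Adj i j then W (x i) (x j) else 1 - W (x i) (x j)) else 1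

open Classical in
/-- The randomness support graphon `1_{rand(W)}` of `W`. -/
def randIndicator (W : ℝ → ℝ → ℝ) : ℝ → ℝ → ℝ := fun x y =>
  if 0 < W x y ∧ W x y < 1 then 1 else 0

/-- A kernel `U` is `K_r`-free if `∏_{i<j} U(x_i, x_j) = 0` for a.e. `x ∈ [0,1]^r`. -/
def KFree (r : ℕ) (U : ℝ → ℝ → ℝ) : Prop :=
  ∀ᵐ x ∂(MeasureTheory.volume.restrict (Set.univ.pi fun _ : Fin r => Set.Icc (0:ℝ) 1)),
    (∏ i : Fin r, ∏ j : Fin r, if i < j then U (x i) (x j) else 1) = 0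

open Classical in
/-- The graphon `W^{(r,s)}`: equal to `1/2` off the diagonal blocks, `1` on the first `s`
diagonal blocks `I_i × I_i`, and `0` on the remaining diagonal blocks. -/
def Wrs (r s : ℕ) : ℝ → ℝ → ℝ := fun x y =>
  if ∃ i j : Fin r, i ≠ j ∧ x ∈ Set.Ioc (((i:ℕ):ℝ)/r) ((((i:ℕ):ℝ)+1)/r) ∧
      y ∈ Set.Ioc (((j:ℕ):ℝ)/r) ((((j:ℕ):ℝ)+1)/r)
  then 1/2
  else if ∃ i : Fin r, (i:ℕ) < s ∧ x ∈ Set.Ioc (((i:ℕ):ℝ)/r) ((((i:ℕ):ℝ)+1)/r) ∧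
      y ∈ Set.Ioc (((i:ℕ):ℝ)/r) ((((i:ℕ):ℝ)+1)/r)
  then 1 else 0

/-- `E_r = ⋃_{i ≠ j} I_i × I_j` where `I_i`, `i = 1, …, r`, are the consecutive
intervals of length `1/r` in `[0,1]`. -/
def Er (r : ℕ) : Set (ℝ × ℝ) :=
  ⋃ (i : Fin r) (j : Fin r) (_ : i ≠ j),
    (Set.Ioc (((i:ℕ):ℝ)/r) ((((i:ℕ):ℝ)+1)/r)) ×ˢ (Set.Ioc (((j:ℕ):ℝ)/r) ((((j:ℕ):ℝ)+1)/r))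

/-- `R_r`: the set of graphons equal to `1/2` on `E_r` and `{0,1}`-valued elsewhere
on `[0,1]²`. -/
def Rset (r : ℕ) : Set (ℝ → ℝ → ℝ) :=
  { W | IsGraphon W ∧ (∀ p ∈ Er r, W p.1 p.2 = 1/2) ∧
      ∀ p ∈ ((Set.Icc (0:ℝ) 1) ×ˢ (Set.Icc (0:ℝ) 1)) \ Er r,
        W p.1 p.2 = 0 ∨ W p.1 p.2 = 1 }

/-- A graphon is random-free if it is `{0,1}`-valued a.e. on `[0,1]²`. -/
def IsRandomFree (W : ℝ → ℝ → ℝ) : Prop :=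
  ∀ᵐ p ∂(MeasureTheory.volume.restrict ((Set.Icc (0:ℝ) 1) ×ˢ (Set.Icc (0:ℝ) 1))),
    W (Prod.fst p) (Prod.snd p) = 0 ∨ W (Prod.fst p) (Prod.snd p) = 1

/-!
Let `d` be the matrix of edge densities of a graph `G` between the parts of the partition, and
make each pair of vertices an edge independently, with the probability that `d` gives to its two
parts. This random graph is `G` with probability at least `2 ^ (-B / 2)`, where `B` is the sum of
`h (d (part of u, part of v))` over all ordered pairs `(u, v)` of vertices, and the same bound holds
for every other graph with density matrix `d`. Probabilities add up to at most `1`, so there are at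
most `2 ^ (B / 2)` such graphs. A density matrix is determined by `k ^ 2` edge counts, each less
than `n ^ 2`, so at most `n ^ (2 * k ^ 2)` matrices occur.

If `d_□(W_G, W) ≤ δ` and every part has at least `n / a` vertices, testing the cut norm on the
product of two parts shows that `d` differs from the averages of `W` by at most `a ^ 2 * δ`.
Since `h` is subadditive, each `h (d i j)` then exceeds the entropy of the corresponding value of
`E[W|P]` by at most `h̃ (a ^ 2 * δ)`. An equipartition into `k ≤ n` parts allows `a = 2 * k`.
-/

open scoped Finset

section BinaryEntropy

lemma binEnt_eq_binEntropy_div_log_two (x : ℝ) : binEnt x = Real.binEntropy x / Real.log 2 := by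
  simp only [binEnt, Real.binEntropy, Real.logb, Real.log_inv]
  ring

lemma binEnt_nonneg {x : ℝ} (hx : x ∈ Icc (0 : ℝ) 1) : 0 ≤ binEnt x := by
  rw [binEnt_eq_binEntropy_div_log_two]
  exact div_nonneg (Real.binEntropy_nonneg hx.1 hx.2) (Real.log_nonneg one_le_two)

lemma binEnt_le_one (x : ℝ) : binEnt x ≤ 1 := by
  rw [binEnt_eq_binEntropy_div_log_two]
  exact div_le_one_of_le₀ Real.binEntropy_le_log_two (Real.log_nonneg one_le_two)

lemma binEnt_zero : binEnt 0 = 0 := by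
  simp [binEnt]

lemma binEnt_one_half : binEnt (1 / 2) = 1 := by
  rw [binEnt_eq_binEntropy_div_log_two, one_div, Real.binEntropy_two_inv,
    div_self (Real.log_pos one_lt_two).ne']

lemma binEnt_one_sub (x : ℝ) : binEnt (1 - x) = binEnt x := by
  simp only [binEnt_eq_binEntropy_div_log_two, Real.binEntropy_one_sub]

lemma monotoneOn_binEnt : MonotoneOn binEnt (Icc 0 (1 / 2)) := by
  intro x hx y hy hxy
  simp only [binEnt_eq_binEntropy_div_log_two]
  rw [one_div] at hx hy
  gcongr
  exact Real.binEntropy_strictMonoOn.monotoneOn hx hy hxy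

lemma concaveOn_binEnt : ConcaveOn ℝ (Icc 0 1) binEnt := by
  have h := Real.strictConcave_binEntropy.concaveOn.smul
    (inv_nonneg.2 (Real.log_nonneg one_le_two))
  exact h.congr fun x _ => (inv_mul_eq_div _ _).trans (binEnt_eq_binEntropy_div_log_two x).symm

lemma map_add_le_of_concaveOn {s : Set ℝ} {f : ℝ → ℝ} (hf : ConcaveOn ℝ s f) (h0 : 0 ∈ s)
    (hf0 : 0 ≤ f 0) {x y : ℝ} (hx : 0 ≤ x) (hy : 0 ≤ y) (hxy : x + y ∈ s) :
    f (x + y) ≤ f x + f y := by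
  rcases (add_nonneg hx hy).eq_or_lt with h | hpos
  · obtain ⟨rfl, rfl⟩ : x = 0 ∧ y = 0 := by constructor <;> linarith
    simpa using hf0
  have chord : ∀ z, 0 ≤ z → z ≤ x + y → z / (x + y) * f (x + y) ≤ f z := by
    intro z hz hzs
    have hle : z / (x + y) ≤ 1 := div_le_one_of_le₀ hzs hpos.le
    have h := hf.2 hxy h0 (div_nonneg hz hpos.le) (sub_nonneg.2 hle) (add_sub_cancel _ _)
    simp only [smul_eq_mul, mul_zero, add_zero, div_mul_cancel₀ z hpos.ne'] at h
    linarith [mul_nonneg (sub_nonneg.2 hle) hf0]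
  calc f (x + y) = x / (x + y) * f (x + y) + y / (x + y) * f (x + y) := by field_simp
    _ ≤ f x + f y := add_le_add (chord x hx (by linarith)) (chord y hy (by linarith))

lemma binEnt_add_le {x y : ℝ} (hx : 0 ≤ x) (hy : 0 ≤ y) (hxy : x + y ≤ 1) :
    binEnt (x + y) ≤ binEnt x + binEnt y :=
  map_add_le_of_concaveOn concaveOn_binEnt ⟨le_rfl, zero_le_one⟩ binEnt_zero.ge hx hy
    ⟨add_nonneg hx hy, hxy⟩

lemma binEnt_le_binEnt_add_binEnt_abs_sub {x y : ℝ} (hx : x ∈ Icc (0 : ℝ) 1)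
    (hy : y ∈ Icc (0 : ℝ) 1) : binEnt x ≤ binEnt y + binEnt |x - y| := by
  rcases le_total y x with hyx | hxy
  · rw [abs_of_nonneg (sub_nonneg.2 hyx)]
    simpa using binEnt_add_le hy.1 (sub_nonneg.2 hyx) (by linarith [hx.2])
  · rw [abs_of_nonpos (sub_nonpos.2 hxy), neg_sub]
    have h := binEnt_add_le (sub_nonneg.2 hy.2) (sub_nonneg.2 hxy) (by linarith [hx.1])
    rwa [sub_add_sub_cancel, binEnt_one_sub, binEnt_one_sub] at h

lemma htilde_nonneg {x : ℝ} (hx : 0 ≤ x) : 0 ≤ htilde x :=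
  binEnt_nonneg ⟨le_min hx one_half_pos.le, (min_le_right _ _).trans one_half_lt_one.le⟩

lemma binEnt_le_htilde {x y : ℝ} (hx : 0 ≤ x) (hxy : x ≤ y) : binEnt x ≤ htilde y := by
  rcases le_total (1 / 2) y with hy | hy
  · rw [htilde, min_eq_right hy, binEnt_one_half]
    exact binEnt_le_one x
  · rw [htilde, min_eq_left hy]
    exact monotoneOn_binEnt ⟨hx, hxy.trans hy⟩ ⟨hx.trans hxy, hy⟩ hxy

lemma binEnt_le_binEnt_add_htilde {x y d : ℝ} (hx : x ∈ Icc (0 : ℝ) 1)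
    (hy : y ∈ Icc (0 : ℝ) 1) (hd : |x - y| ≤ d) : binEnt x ≤ binEnt y + htilde d :=
  (binEnt_le_binEnt_add_binEnt_abs_sub hx hy).trans <| by
    gcongr
    exact binEnt_le_htilde (abs_nonneg _) hd

end BinaryEntropy

section OrderedPairs

variable {α : Type*} [Fintype α] [LinearOrder α]

variable (α) in
/-- The pairs `(u, v)` with `u < v`; they list every unordered pair of distinct elements once, so
that the edges of a graph can be indexed by pairs. -/
def ltPairs : Finset (α × α) := {p | p.1 < p.2}

lemma mk_mem_ltPairs {u v : α} : (u, v) ∈ ltPairs α ↔ u < v := by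
  simp [ltPairs]

lemma sum_le_two_mul_sum_ltPairs {f : α × α → ℝ} (hswap : ∀ p, f p.swap = f p)
    (hdiag : ∀ u, f (u, u) ≤ 0) : ∑ p, f p ≤ 2 * ∑ p ∈ ltPairs α, f p := by
  set g : α × α → ℝ := fun p => if p.1 < p.2 then f p else 0
  have hg : ∀ p, f p ≤ g p + g p.swap := by
    rintro ⟨u, v⟩
    rcases lt_trichotomy u v with h | rfl | h
    · simp [g, h, h.not_gt]
    · simpa [g] using hdiag u
    · simpa [g, h, h.not_gt] using (hswap (u, v)).ge
  calc ∑ p, f p ≤ ∑ p, (g p + g p.swap) := Finset.sum_le_sum fun p _ => hg p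
    _ = ∑ p, g p + ∑ p, g p := by
      rw [Finset.sum_add_distrib]
      exact congrArg _ ((Equiv.prodComm α α).sum_comp g)
    _ = 2 * ∑ p ∈ ltPairs α, f p := by rw [← two_mul, ltPairs, Finset.sum_filter]

lemma sum_powerset_prod_ite_mem {β R : Type*} [DecidableEq β] [CommRing R]
    (E : Finset β) (q : β → R) :
    ∑ A ∈ E.powerset, ∏ e ∈ E, (if e ∈ A then q e else 1 - q e) = 1 := by
  have h := (Finset.prod_add q (1 - q) E).symm
  simp only [Pi.sub_apply, Pi.one_apply, add_sub_cancel, Finset.prod_const_one] at h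
  refine (Finset.sum_congr rfl fun A hA => ?_).trans h
  rw [Finset.prod_ite, Finset.filter_mem_eq_inter, Finset.filter_notMem_eq_sdiff,
    Finset.inter_eq_right.2 (Finset.mem_powerset.1 hA)]

open Classical in
/-- The probability of `G` in the random graph in which the pairs `u < v` are edges independently
of each other, with probability `q u v`. -/
def graphWeight (q : α → α → ℝ) (G : SimpleGraph α) : ℝ :=
  ∏ p ∈ ltPairs α, if G.Adj p.1 p.2 then q p.1 p.2 else 1 - q p.1 p.2

open Classical in
lemma filter_adj_ltPairs_injective :
    Function.Injective fun G : SimpleGraph α => {p ∈ ltPairs α | G.Adj p.1 p.2} := by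
  intro G H h
  have adj_iff : ∀ u v, u < v → (G.Adj u v ↔ H.Adj u v) := fun u v huv => by
    simpa [mk_mem_ltPairs, huv] using Finset.ext_iff.1 h (u, v)
  ext u v
  rcases lt_trichotomy u v with huv | rfl | huv
  · exact adj_iff u v huv
  · simp
  · rw [G.adj_comm, H.adj_comm, adj_iff v u huv]

lemma sum_graphWeight_le_one {q : α → α → ℝ} (hq : ∀ u v, q u v ∈ Icc (0 : ℝ) 1)
    (s : Finset (SimpleGraph α)) : ∑ G ∈ s, graphWeight q G ≤ 1 := by
  classical
  set w : Finset (α × α) → ℝ := fun A =>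
    ∏ p ∈ ltPairs α, if p ∈ A then q p.1 p.2 else 1 - q p.1 p.2
  set edges : SimpleGraph α → Finset (α × α) := fun G => {p ∈ ltPairs α | G.Adj p.1 p.2}
  have weight_eq : ∀ G, graphWeight q G = w (edges G) := fun G =>
    Finset.prod_congr rfl fun p hp => by simp [edges, hp]
  have w_nonneg : ∀ A, 0 ≤ w A := fun A => Finset.prod_nonneg fun p _ => by
    split_ifs
    exacts [(hq _ _).1, sub_nonneg.2 (hq _ _).2]
  calc ∑ G ∈ s, graphWeight q G = ∑ A ∈ s.image edges, w A := by
        rw [Finset.sum_image filter_adj_ltPairs_injective.injOn]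
        exact Finset.sum_congr rfl fun G _ => weight_eq G
    _ ≤ ∑ A ∈ (ltPairs α).powerset, w A :=
        Finset.sum_le_sum_of_subset_of_nonneg
          (Finset.image_subset_iff.2 fun G _ => Finset.mem_powerset.2 (Finset.filter_subset _ _))
          fun A _ _ => w_nonneg A
    _ = 1 := sum_powerset_prod_ite_mem _ _

end OrderedPairs

section Blocks

variable {α ι : Type*} [Fintype α] [DecidableEq ι]

/-- The block `V i = {u | c u = i}` of the partition of `α` into the fibres of `c`. Partitions are
encoded by such a map `c`, which sends an element to the index of its block. -/
def block (c : α → ι) (i : ι) : Finset α := {u | c u = i}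

@[simp] lemma mem_block {c : α → ι} {u : α} {i : ι} : u ∈ block c i ↔ c u = i := by
  simp [block]

lemma exists_eq_block {V : ι → Finset α} (hdisj : ∀ i j, i ≠ j → Disjoint (V i) (V j))
    (hcover : ∀ u, ∃ i, u ∈ V i) : ∃ c : α → ι, V = block c := by
  choose c hc using hcover
  refine ⟨c, ?_⟩
  ext i u
  rw [mem_block]
  refine ⟨fun hu => ?_, fun h => h ▸ hc u⟩
  by_contra hne
  exact Finset.disjoint_left.1 (hdisj _ _ hne) (hc u) hu

lemma sum_prod_eq_sum_block {M : Type*} [AddCommMonoid M] (c : α → ι) (f : α × α → M) :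
    ∑ p, f p = ∑ ij ∈ Finset.univ.image c ×ˢ Finset.univ.image c,
      ∑ p ∈ block c ij.1 ×ˢ block c ij.2, f p := by
  rw [← Finset.sum_fiberwise_of_maps_to (g := fun p : α × α => (c p.1, c p.2))
    (t := Finset.univ.image c ×ˢ Finset.univ.image c) (by simp)]
  refine Finset.sum_congr rfl fun ij _ => Finset.sum_congr ?_ fun _ _ => rfl
  ext p
  simp [Prod.ext_iff]

open Classical in
/-- The number `e(V i, V j)` of edges between two blocks, edges inside a block counting twice. -/
def blockEdgeCount (c : α → ι) (G : SimpleGraph α) (i j : ι) : ℕ :=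
  #(G.interedges (block c i) (block c j))

open Classical in
/-- The edge density `d(V i, V j)` between two blocks, with value `0` if one of them is empty. -/
def blockDensity (c : α → ι) (G : SimpleGraph α) (i j : ι) : ℝ :=
  G.edgeDensity (block c i) (block c j)

lemma blockDensity_mem_Icc (c : α → ι) (G : SimpleGraph α) (i j : ι) :
    blockDensity c G i j ∈ Icc (0 : ℝ) 1 := by
  classical
  rw [blockDensity]
  exact ⟨mod_cast G.edgeDensity_nonneg _ _, mod_cast G.edgeDensity_le_one _ _⟩

lemma blockDensity_comm (c : α → ι) (G : SimpleGraph α) (i j : ι) :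
    blockDensity c G i j = blockDensity c G j i := by
  rw [blockDensity, SimpleGraph.edgeDensity_comm, blockDensity]

lemma blockDensity_eq_div (c : α → ι) (G : SimpleGraph α) (i j : ι) :
    blockDensity c G i j = blockEdgeCount c G i j / (#(block c i) * #(block c j)) := by
  rw [blockDensity, SimpleGraph.edgeDensity_def]
  push_cast
  rfl

lemma card_mul_card_mul_blockDensity (c : α → ι) (G : SimpleGraph α) (i j : ι) :
    #(block c i) * #(block c j) * blockDensity c G i j = blockEdgeCount c G i j := by
  classical
  rw [blockDensity_eq_div]
  refine mul_div_cancel_of_imp' fun h => ?_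
  have hle : blockEdgeCount c G i j ≤ #(block c i) * #(block c j) := G.card_interedges_le_mul _ _
  rw [← Nat.cast_mul, Nat.cast_eq_zero] at h
  exact_mod_cast Nat.le_zero.1 (h ▸ hle)

lemma blockEdgeCount_lt [Nonempty α] (c : α → ι) (G : SimpleGraph α) (i j : ι) :
    blockEdgeCount c G i j < Fintype.card α ^ 2 := by
  classical
  obtain ⟨u⟩ := ‹Nonempty α›
  rw [sq, ← Fintype.card_prod]
  refine Finset.card_lt_univ_of_notMem (x := (u, u)) ?_
  simp [SimpleGraph.mk_mem_interedges_iff]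

lemma blockDensity_pos_of_adj (c : α → ι) {G : SimpleGraph α} {u v : α} (h : G.Adj u v) :
    0 < blockDensity c G (c u) (c v) := by
  classical
  refine (blockDensity_mem_Icc c G _ _).1.lt_of_ne' fun h0 => ?_
  have hcount := card_mul_card_mul_blockDensity c G (c u) (c v)
  rw [h0, mul_zero, eq_comm, Nat.cast_eq_zero, blockEdgeCount, Finset.card_eq_zero] at hcount
  exact Finset.eq_empty_iff_forall_notMem.1 hcount (u, v)
    (G.mk_mem_interedges_iff.2 ⟨mem_block.2 rfl, mem_block.2 rfl, h⟩)

lemma blockDensity_lt_one_of_not_adj (c : α → ι) {G : SimpleGraph α} {u v : α}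
    (h : ¬G.Adj u v) : blockDensity c G (c u) (c v) < 1 := by
  classical
  refine (blockDensity_mem_Icc c G _ _).2.lt_of_ne fun h1 => ?_
  have hcount := card_mul_card_mul_blockDensity c G (c u) (c v)
  rw [h1, mul_one, ← Nat.cast_mul, Nat.cast_inj, ← Finset.card_product] at hcount
  have heq := Finset.eq_of_subset_of_card_le (Finset.filter_subset _ _) hcount.le
  have hmem : (u, v) ∈ G.interedges (block c (c u)) (block c (c v)) := by
    rw [SimpleGraph.interedges_def, heq]
    exact Finset.mk_mem_product (mem_block.2 rfl) (mem_block.2 rfl)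
  exact h (G.mk_mem_interedges_iff.1 hmem).2.2

lemma sum_logb_ite_eq_neg_card_mul_binEnt {β : Type*} {s : Finset β} {P : β → Prop}
    [DecidablePred P] {d : ℝ} (hd : #s * d = #{x ∈ s | P x}) :
    ∑ x ∈ s, Real.logb 2 (if P x then d else 1 - d) = -(#s * binEnt d) := by
  have hcard : (#{x ∈ s | P x} : ℝ) + #{x ∈ s | ¬P x} = #s :=
    mod_cast s.card_filter_add_card_filter_not P
  simp only [apply_ite (Real.logb 2), Finset.sum_ite, Finset.sum_const, nsmul_eq_mul]
  rw [eq_sub_of_add_eq' hcard, ← hd, binEnt]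
  ring

open Classical in
lemma sum_logb_blockDensity (c : α → ι) (G : SimpleGraph α) :
    ∑ p : α × α, Real.logb 2 (if G.Adj p.1 p.2 then blockDensity c G (c p.1) (c p.2)
        else 1 - blockDensity c G (c p.1) (c p.2)) =
      -∑ p : α × α, binEnt (blockDensity c G (c p.1) (c p.2)) := by
  rw [← Finset.sum_neg_distrib, sum_prod_eq_sum_block c, sum_prod_eq_sum_block c]
  refine Finset.sum_congr rfl fun ⟨i, j⟩ _ => ?_
  have hmem : ∀ p ∈ block c i ×ˢ block c j, c p.1 = i ∧ c p.2 = j := by simp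
  calc _ = ∑ p ∈ block c i ×ˢ block c j, Real.logb 2 (if G.Adj p.1 p.2
          then blockDensity c G i j else 1 - blockDensity c G i j) :=
        Finset.sum_congr rfl fun p hp => by rw [(hmem p hp).1, (hmem p hp).2]
    _ = -(#(block c i ×ˢ block c j) * binEnt (blockDensity c G i j)) := by
        refine sum_logb_ite_eq_neg_card_mul_binEnt ?_
        rw [Finset.card_product, Nat.cast_mul, card_mul_card_mul_blockDensity]
        rfl
    _ = ∑ _ ∈ block c i ×ˢ block c j, -binEnt (blockDensity c G i j) := by
        rw [Finset.sum_const, nsmul_eq_mul, mul_neg]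
    _ = _ := Finset.sum_congr rfl fun p hp => by rw [(hmem p hp).1, (hmem p hp).2]

end Blocks

section Counting

variable {α ι : Type*} [Fintype α] [LinearOrder α] [DecidableEq ι]

lemma two_rpow_neg_le_graphWeight_blockDensity (c : α → ι) (G : SimpleGraph α) :
    (2 : ℝ) ^ (-((1 / 2) * ∑ p : α × α, binEnt (blockDensity c G (c p.1) (c p.2)))) ≤
      graphWeight (fun u v => blockDensity c G (c u) (c v)) G := by
  classical
  set factor : α × α → ℝ := fun p => if G.Adj p.1 p.2
    then blockDensity c G (c p.1) (c p.2) else 1 - blockDensity c G (c p.1) (c p.2)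
  have factor_pos : ∀ p, 0 < factor p := fun p => by
    simp only [factor]
    split_ifs with h
    exacts [blockDensity_pos_of_adj c h, sub_pos.2 (blockDensity_lt_one_of_not_adj c h)]
  have factor_swap : ∀ p, factor p.swap = factor p := fun p => by
    simp only [factor, Prod.fst_swap, Prod.snd_swap, G.adj_comm p.2,
      blockDensity_comm c G (c p.2)]
  have logb_factor_diag : ∀ u, Real.logb 2 (factor (u, u)) ≤ 0 := fun u => by
    refine Real.logb_nonpos one_lt_two (factor_pos _).le ?_
    simpa [factor] using (blockDensity_mem_Icc c G (c u) (c u)).1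
  have weight_eq : graphWeight (fun u v => blockDensity c G (c u) (c v)) G =
    ∏ p ∈ ltPairs α, factor p := rfl
  rw [weight_eq, ← Real.le_logb_iff_rpow_le one_lt_two (Finset.prod_pos fun p _ => factor_pos p),
    Real.logb_prod _ _ fun p _ => (factor_pos p).ne']
  have hsum := sum_le_two_mul_sum_ltPairs (f := fun p => Real.logb 2 (factor p))
    (fun p => by rw [factor_swap]) logb_factor_diag
  rw [sum_logb_blockDensity] at hsum
  linarith

lemma card_le_two_rpow_of_blockDensity_eq (c : α → ι) (G₀ : SimpleGraph α)
    {s : Finset (SimpleGraph α)} (hs : ∀ G ∈ s, blockDensity c G = blockDensity c G₀) :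
    (#s : ℝ) ≤
      2 ^ ((1 / 2) * ∑ p : α × α, binEnt (blockDensity c G₀ (c p.1) (c p.2))) := by
  set B := (1 / 2) * ∑ p : α × α, binEnt (blockDensity c G₀ (c p.1) (c p.2)) with hB
  set q : α → α → ℝ := fun u v => blockDensity c G₀ (c u) (c v) with hq
  have hweight : ∀ G ∈ s, (2 : ℝ) ^ (-B) ≤ graphWeight q G := fun G hG => by
    rw [hB, hq, ← hs G hG]
    exact two_rpow_neg_le_graphWeight_blockDensity c G
  have hle : #s * (2 : ℝ) ^ (-B) ≤ 1 := by
    rw [← nsmul_eq_mul]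
    exact (Finset.card_nsmul_le_sum s _ _ hweight).trans
      (sum_graphWeight_le_one (fun u v => blockDensity_mem_Icc c G₀ _ _) s)
  rwa [Real.rpow_neg zero_le_two, ← div_eq_mul_inv, div_le_one (by positivity)] at hle

lemma card_le_of_sum_binEnt_blockDensity_le [Nonempty α] [Fintype ι] (c : α → ι)
    {s : Finset (SimpleGraph α)} {B : ℝ}
    (hs : ∀ G ∈ s, ∑ p : α × α, binEnt (blockDensity c G (c p.1) (c p.2)) ≤ B) :
    (#s : ℝ) ≤ 2 ^ ((1 / 2) * B) * Fintype.card α ^ (2 * Fintype.card ι ^ 2) := by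
  classical
  set t : Finset (ι → ι → ℕ) :=
    Fintype.piFinset fun _ => Fintype.piFinset fun _ => Finset.range (Fintype.card α ^ 2)
  have ht : #t = Fintype.card α ^ (2 * Fintype.card ι ^ 2) := by
    simp only [t, Fintype.card_piFinset, Finset.card_range, Finset.prod_const, Finset.card_univ]
    rw [← pow_mul, ← pow_mul, ← sq]
  have hmaps : ∀ G ∈ s, blockEdgeCount c G ∈ t := fun G _ => by
    simp [t, Fintype.mem_piFinset, blockEdgeCount_lt c G]
  have hfiber : ∀ M ∈ t, #{G ∈ s | blockEdgeCount c G = M} ≤ ⌊(2 : ℝ) ^ ((1 / 2) * B)⌋₊ := by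
    intro M _
    refine Nat.le_floor ?_
    rcases {G ∈ s | blockEdgeCount c G = M}.eq_empty_or_nonempty with h | ⟨G₀, hG₀⟩
    · rw [h, Finset.card_empty, Nat.cast_zero]
      positivity
    rw [Finset.mem_filter] at hG₀
    refine (card_le_two_rpow_of_blockDensity_eq c G₀ fun G hG => ?_).trans ?_
    · ext i j
      rw [blockDensity_eq_div, blockDensity_eq_div, (Finset.mem_filter.1 hG).2, hG₀.2]
    · gcongr
      exacts [one_le_two, hs G₀ hG₀.1]
  calc (#s : ℝ) ≤ ⌊(2 : ℝ) ^ ((1 / 2) * B)⌋₊ * #t :=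
        mod_cast Finset.card_le_mul_card_image_of_maps_to hmaps _ hfiber
    _ ≤ 2 ^ ((1 / 2) * B) * Fintype.card α ^ (2 * Fintype.card ι ^ 2) := by
        rw [ht, Nat.cast_pow]
        gcongr
        exact Nat.floor_le (by positivity)

lemma logb_card_le_of_sum_binEnt_blockDensity_le [Nonempty α] [Fintype ι] (c : α → ι)
    {s : Finset (SimpleGraph α)} {B : ℝ} (hB : 0 ≤ B)
    (hs : ∀ G ∈ s, ∑ p : α × α, binEnt (blockDensity c G (c p.1) (c p.2)) ≤ B) :
    Real.logb 2 #s ≤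
      (1 / 2) * B + 2 * (Fintype.card ι : ℝ) ^ 2 * Real.logb 2 (Fintype.card α) := by
  have hα : (1 : ℝ) ≤ Fintype.card α := mod_cast Fintype.card_pos
  rcases s.eq_empty_or_nonempty with rfl | hne
  · have := Real.logb_nonneg one_lt_two hα
    rw [Finset.card_empty, Nat.cast_zero, Real.logb_zero]
    positivity
  have hcard : (0 : ℝ) < #s := mod_cast hne.card_pos
  have hle := card_le_of_sum_binEnt_blockDensity_le c hs
  refine (Real.logb_le_logb_of_le one_lt_two hcard hle).trans_eq ?_
  rw [Real.logb_mul (by positivity) (by positivity), Real.logb_rpow two_pos one_lt_two.ne',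
    Real.logb_pow]
  push_cast
  rfl

end Counting

section CutNorm

lemma integrableOn_of_forall_mem_Icc {W : ℝ → ℝ → ℝ} (hWm : Measurable (Function.uncurry W))
    (hW01 : ∀ x y, W x y ∈ Icc (0 : ℝ) 1) {s : Set (ℝ × ℝ)} (hs : volume s ≠ ⊤) :
    IntegrableOn (fun p => W p.1 p.2) s :=
  Measure.integrableOn_of_bounded hs hWm.aestronglyMeasurable <| Eventually.of_forall fun p =>
    (Real.norm_of_nonneg (hW01 p.1 p.2).1).trans_le (hW01 p.1 p.2).2

lemma average_mem_Icc_zero_one {X : Type*} [MeasurableSpace X] (μ : Measure X) {f : X → ℝ}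
    (hf : ∀ x, f x ∈ Icc (0 : ℝ) 1) : ⨍ x, f x ∂μ ∈ Icc (0 : ℝ) 1 := by
  have hmass : ((μ univ)⁻¹ • μ) univ ≤ 1 := by
    simp [ENNReal.inv_mul_le_one]
  have : IsFiniteMeasure ((μ univ)⁻¹ • μ) := ⟨hmass.trans_lt ENNReal.one_lt_top⟩
  refine ⟨integral_nonneg fun x => (hf x).1, ?_⟩
  calc ⨍ x, f x ∂μ ≤ ‖⨍ x, f x ∂μ‖ := le_abs_self _
    _ ≤ 1 * ((μ univ)⁻¹ • μ).real univ :=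
      norm_integral_le_of_norm_le_const <| Eventually.of_forall fun x =>
        (Real.norm_of_nonneg (hf x).1).trans_le (hf x).2
    _ ≤ 1 := by
      rw [one_mul]
      exact ENNReal.toReal_mono ENNReal.one_ne_top hmass

lemma volume_unitSquare_ne_top : volume (Icc (0 : ℝ) 1 ×ˢ Icc (0 : ℝ) 1) ≠ ⊤ :=
  (isCompact_Icc.prod isCompact_Icc).measure_lt_top.ne

lemma le_cutNorm {U : ℝ → ℝ → ℝ}
    (hU : IntegrableOn (fun p : ℝ × ℝ => U p.1 p.2) (Icc 0 1 ×ˢ Icc 0 1)) {S T : Set ℝ}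
    (hS : MeasurableSet S) (hT : MeasurableSet T) (hS1 : S ⊆ Icc 0 1) (hT1 : T ⊆ Icc 0 1) :
    |∫ p in S ×ˢ T, U p.1 p.2| ≤ cutNorm U := by
  refine le_csSup ⟨∫ p in Icc 0 1 ×ˢ Icc 0 1, |U p.1 p.2|, ?_⟩ ⟨S, T, hS, hT, hS1, hT1, rfl⟩
  rintro r ⟨S, T, -, -, hS1, hT1, rfl⟩
  exact (abs_integral_le_integral_abs).trans <| setIntegral_mono_set hU.abs
    (Eventually.of_forall fun p => abs_nonneg _) (Set.prod_mono hS1 hT1).eventuallyLE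

lemma volume_real_mul_abs_setAverage_sub_le_dCut {W₁ W₂ : ℝ → ℝ → ℝ}
    (h₁ : IntegrableOn (fun p : ℝ × ℝ => W₁ p.1 p.2) (Icc 0 1 ×ˢ Icc 0 1))
    (h₂ : IntegrableOn (fun p : ℝ × ℝ => W₂ p.1 p.2) (Icc 0 1 ×ˢ Icc 0 1)) {S T : Set ℝ}
    (hS : MeasurableSet S) (hT : MeasurableSet T) (hS1 : S ⊆ Icc 0 1) (hT1 : T ⊆ Icc 0 1) :
    volume.real (S ×ˢ T) * |(⨍ p in S ×ˢ T, W₁ p.1 p.2) - ⨍ p in S ×ˢ T, W₂ p.1 p.2| ≤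
      dCut W₁ W₂ := by
  have hsub : S ×ˢ T ⊆ Icc 0 1 ×ˢ Icc 0 1 := Set.prod_mono hS1 hT1
  have hfin : volume (S ×ˢ T) ≠ ⊤ := measure_ne_top_of_subset hsub volume_unitSquare_ne_top
  refine Eq.trans_le ?_ (le_cutNorm (h₁.sub h₂) hS hT hS1 hT1)
  rw [integral_sub (h₁.mono_set hsub) (h₂.mono_set hsub), ← measure_smul_setAverage _ hfin,
    ← measure_smul_setAverage _ hfin, ← smul_sub, smul_eq_mul, abs_mul,
    abs_of_nonneg measureReal_nonneg]

end CutNorm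

section Cells

lemma setIntegral_biUnion_of_eqOn_const {X κ E : Type*} [MeasurableSpace X]
    [NormedAddCommGroup E] [NormedSpace ℝ E] [CompleteSpace E] {μ : Measure X} {I : Finset κ}
    {s : κ → Set X} {f : X → E} {a : κ → E} (hs : ∀ i ∈ I, MeasurableSet (s i))
    (hdisj : (I : Set κ).PairwiseDisjoint s) (hμ : ∀ i ∈ I, μ (s i) ≠ ⊤)
    (hf : ∀ i ∈ I, EqOn f (fun _ => a i) (s i)) :
    ∫ x in ⋃ i ∈ I, s i, f x ∂μ = ∑ i ∈ I, μ.real (s i) • a i := by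
  rw [integral_biUnion_finset I hs hdisj fun i hi =>
    (integrableOn_const (hμ i hi)).congr_fun (hf i hi).symm (hs i hi)]
  exact Finset.sum_congr rfl fun i hi => by
    rw [setIntegral_congr_fun (hs i hi) (hf i hi), setIntegral_const]

variable {n : ℕ}

/-- The interval of `[0,1]` that stands for the vertex `u` in `graphonOfGraph`. Vertices are
numbered from `0`, so this is the interval of the vertex `u + 1` of `{1, …, n}`. -/
def cell (n : ℕ) (u : Fin n) : Set ℝ := Ioc (u / n) ((u + 1) / n)

lemma mem_cell_iff {u : Fin n} {x : ℝ} : x ∈ cell n u ↔ ⌈(n : ℝ) * x⌉ = (u : ℤ) + 1 := by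
  have hn : (0 : ℝ) < n := mod_cast u.pos
  rw [cell, Int.ceil_eq_iff, Set.mem_Ioc, div_lt_iff₀ hn, le_div_iff₀ hn, mul_comm x]
  simp

lemma eq_of_mem_cell {u v : Fin n} {x : ℝ} (hu : x ∈ cell n u) (hv : x ∈ cell n v) : u = v := by
  rw [mem_cell_iff] at hu hv
  exact Fin.ext (by omega)

lemma pairwiseDisjoint_cell (s : Set (Fin n)) : s.PairwiseDisjoint (cell n) :=
  fun _ _ _ _ huv => Set.disjoint_left.2 fun _ hu hv => huv (eq_of_mem_cell hu hv)

lemma measurableSet_cell (u : Fin n) : MeasurableSet (cell n u) := measurableSet_Ioc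

lemma volume_cell_ne_top (u : Fin n) : volume (cell n u) ≠ ⊤ := measure_Ioc_lt_top.ne

lemma volume_real_cell (u : Fin n) : volume.real (cell n u) = 1 / n := by
  rw [cell, Real.volume_real_Ioc_of_le (by gcongr; linarith)]
  ring

/-- The subset of `[0,1]` that stands for the vertex set `A`. -/
def cellUnion (A : Finset (Fin n)) : Set ℝ := ⋃ u ∈ A, cell n u

lemma mem_cellUnion_iff {A : Finset (Fin n)} {u : Fin n} {x : ℝ} (hx : x ∈ cell n u) :
    x ∈ cellUnion A ↔ u ∈ A := by
  simp only [cellUnion, Set.mem_iUnion, exists_prop]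
  exact ⟨fun ⟨v, hv, hxv⟩ => eq_of_mem_cell hx hxv ▸ hv, fun hu => ⟨u, hu, hx⟩⟩

lemma disjoint_cellUnion {A B : Finset (Fin n)} (h : Disjoint A B) :
    Disjoint (cellUnion A) (cellUnion B) := by
  refine Set.disjoint_left.2 fun x hxA hxB => ?_
  obtain ⟨u, hu, hxu⟩ := Set.mem_iUnion₂.1 hxA
  exact Finset.disjoint_left.1 h hu ((mem_cellUnion_iff hxu).1 hxB)

lemma measurableSet_cellUnion (A : Finset (Fin n)) : MeasurableSet (cellUnion A) :=
  A.measurableSet_biUnion fun u _ => measurableSet_cell u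

lemma cellUnion_univ (hn : 0 < n) : cellUnion (Finset.univ : Finset (Fin n)) = Ioc 0 1 := by
  have hn' : (0 : ℝ) < n := mod_cast hn
  ext x
  have hpos : 0 < x ↔ 0 < ⌈(n : ℝ) * x⌉ := by rw [Int.ceil_pos, mul_pos_iff_of_pos_left hn']
  have hle : x ≤ 1 ↔ ⌈(n : ℝ) * x⌉ ≤ n := by
    rw [Int.ceil_le, Int.cast_natCast, mul_le_iff_le_one_right hn']
  simp only [cellUnion, Set.mem_iUnion, Finset.mem_univ, exists_true_left, mem_cell_iff,
    Set.mem_Ioc, hpos, hle]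
  constructor
  · rintro ⟨u, hu⟩
    omega
  · rintro ⟨hx0, hx1⟩
    exact ⟨⟨(⌈(n : ℝ) * x⌉ - 1).toNat, by omega⟩, by simp only; omega⟩

lemma cellUnion_subset_Icc (A : Finset (Fin n)) : cellUnion A ⊆ Icc 0 1 := by
  rcases n.eq_zero_or_pos with rfl | hn
  · simp [cellUnion]
  · exact (Set.biUnion_subset_biUnion_left fun u _ => Finset.mem_univ u).trans
      ((cellUnion_univ hn).trans_subset Ioc_subset_Icc_self)

lemma setIntegral_Icc_zero_one_of_eqOn_cell (hn : 0 < n) {f : ℝ → ℝ} {a : Fin n → ℝ}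
    (hf : ∀ u, EqOn f (fun _ => a u) (cell n u)) :
    ∫ x in Icc (0 : ℝ) 1, f x = (∑ u, a u) / n := by
  rw [integral_Icc_eq_integral_Ioc, ← cellUnion_univ hn, cellUnion,
    setIntegral_biUnion_of_eqOn_const (fun u _ => measurableSet_cell u)
      (pairwiseDisjoint_cell _) (fun u _ => volume_cell_ne_top u) fun u _ => hf u]
  simp only [volume_real_cell, smul_eq_mul, one_div, Finset.sum_div, inv_mul_eq_div]

lemma cellUnion_prod_cellUnion (A B : Finset (Fin n)) :
    cellUnion A ×ˢ cellUnion B = ⋃ p ∈ A ×ˢ B, cell n p.1 ×ˢ cell n p.2 := by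
  ext ⟨x, y⟩
  simp only [cellUnion, Set.mem_prod, Set.mem_iUnion, Finset.mem_product, exists_prop, Prod.exists]
  tauto

lemma setIntegral_cellUnion_prod_cellUnion {f : ℝ × ℝ → ℝ} {a : Fin n → Fin n → ℝ}
    (hf : ∀ u v, EqOn f (fun _ => a u v) (cell n u ×ˢ cell n v)) (A B : Finset (Fin n)) :
    ∫ p in cellUnion A ×ˢ cellUnion B, f p = (∑ p ∈ A ×ˢ B, a p.1 p.2) / n ^ 2 := by
  have hdisj : ((A ×ˢ B : Finset (Fin n × Fin n)) : Set (Fin n × Fin n)).PairwiseDisjoint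
      fun p => cell n p.1 ×ˢ cell n p.2 := by
    rw [Finset.coe_product]
    exact (pairwiseDisjoint_cell _).prod (pairwiseDisjoint_cell _)
  rw [cellUnion_prod_cellUnion, setIntegral_biUnion_of_eqOn_const
    (fun p _ => (measurableSet_cell p.1).prod (measurableSet_cell p.2)) hdisj
    (fun p _ => by
      rw [Measure.volume_eq_prod, Measure.prod_prod]
      exact ENNReal.mul_ne_top (volume_cell_ne_top _) (volume_cell_ne_top _))
    fun p _ => hf p.1 p.2, Finset.sum_div]
  refine Finset.sum_congr rfl fun p _ => ?_
  rw [Measure.volume_eq_prod, measureReal_prod_prod, volume_real_cell, volume_real_cell,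
    smul_eq_mul]
  ring

lemma volume_real_cellUnion_prod_cellUnion (A B : Finset (Fin n)) :
    volume.real (cellUnion A ×ˢ cellUnion B) = #A * #B / n ^ 2 := by
  have h := setIntegral_cellUnion_prod_cellUnion (f := fun _ => 1) (a := fun _ _ => 1)
    (fun _ _ _ _ => rfl) A B
  simpa using h

lemma graphonEnt_eq_of_const_on_cells (hn : 0 < n) {U : ℝ → ℝ → ℝ} {a : Fin n → Fin n → ℝ}
    (hU : ∀ u v, ∀ x ∈ cell n u, ∀ y ∈ cell n v, U x y = a u v) :
    graphonEnt U = (∑ p : Fin n × Fin n, binEnt (a p.1 p.2)) / n ^ 2 := by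
  have hinner : ∀ u, ∀ x ∈ cell n u,
      ∫ y in Icc (0 : ℝ) 1, binEnt (U x y) = (∑ v, binEnt (a u v)) / n := fun u x hx =>
    setIntegral_Icc_zero_one_of_eqOn_cell hn fun v y hy => congrArg binEnt (hU u v x hx y hy)
  rw [graphonEnt, setIntegral_Icc_zero_one_of_eqOn_cell hn hinner, Fintype.sum_prod_type,
    ← Finset.sum_div, div_div, ← sq]

end Cells

section GraphonOfGraph

variable {n : ℕ}

lemma graphonOfGraph_mem_Icc (G : SimpleGraph (Fin n)) (x y : ℝ) :
    graphonOfGraph G x y ∈ Icc (0 : ℝ) 1 := by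
  unfold graphonOfGraph
  split_ifs <;> simp

lemma measurable_graphonOfGraph (G : SimpleGraph (Fin n)) :
    Measurable (Function.uncurry (graphonOfGraph G)) := by
  classical
  set f : ℤ × ℤ → ℝ := fun z =>
    if ∃ i j : Fin n, G.Adj i j ∧ z.1 = (i : ℤ) + 1 ∧ z.2 = (j : ℤ) + 1 then 1 else 0
  have hceil : Measurable fun p : ℝ × ℝ => (⌈(n : ℝ) * p.1⌉, ⌈(n : ℝ) * p.2⌉) := by fun_prop
  exact (Measurable.of_discrete (f := f)).comp hceil

open Classical in
lemma graphonOfGraph_eq_ite (G : SimpleGraph (Fin n)) {u v : Fin n} {x y : ℝ}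
    (hx : x ∈ cell n u) (hy : y ∈ cell n v) :
    graphonOfGraph G x y = if G.Adj u v then 1 else 0 := by
  refine if_congr ⟨?_, fun h => ⟨u, v, h, mem_cell_iff.1 hx, mem_cell_iff.1 hy⟩⟩ rfl rfl
  rintro ⟨i, j, hij, hi, hj⟩
  rwa [eq_of_mem_cell hx (mem_cell_iff.2 hi), eq_of_mem_cell hy (mem_cell_iff.2 hj)]

lemma setAverage_graphonOfGraph (G : SimpleGraph (Fin n)) [DecidableRel G.Adj]
    (A B : Finset (Fin n)) :
    ⨍ p in cellUnion A ×ˢ cellUnion B, graphonOfGraph G p.1 p.2 = G.edgeDensity A B := by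
  classical
  rcases n.eq_zero_or_pos with rfl | hn
  · simp [Finset.eq_empty_of_isEmpty, cellUnion]
  rw [setAverage_eq, volume_real_cellUnion_prod_cellUnion,
    setIntegral_cellUnion_prod_cellUnion (a := fun u v => if G.Adj u v then 1 else 0)
      fun u v p hp => by convert graphonOfGraph_eq_ite G hp.1 hp.2,
    Finset.sum_boole, SimpleGraph.edgeDensity_def, SimpleGraph.interedges_def, smul_eq_mul]
  push_cast
  field_simp

lemma abs_edgeDensity_sub_setAverage_le (hn : 0 < n) (G : SimpleGraph (Fin n))
    [DecidableRel G.Adj] {W : ℝ → ℝ → ℝ} (hWm : Measurable (Function.uncurry W))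
    (hW01 : ∀ x y, W x y ∈ Icc (0 : ℝ) 1) {A B : Finset (Fin n)} {a δ : ℝ} (hA : n ≤ a * #A)
    (hB : n ≤ a * #B) (hG : dCut (graphonOfGraph G) W ≤ δ) :
    |G.edgeDensity A B - ⨍ p in cellUnion A ×ˢ cellUnion B, W p.1 p.2| ≤ a ^ 2 * δ := by
  have hcut := (volume_real_mul_abs_setAverage_sub_le_dCut
    (integrableOn_of_forall_mem_Icc (measurable_graphonOfGraph G) (graphonOfGraph_mem_Icc G)
      volume_unitSquare_ne_top) (integrableOn_of_forall_mem_Icc hWm hW01 volume_unitSquare_ne_top)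
    (measurableSet_cellUnion A) (measurableSet_cellUnion B) (cellUnion_subset_Icc A)
    (cellUnion_subset_Icc B)).trans hG
  rw [setAverage_graphonOfGraph, volume_real_cellUnion_prod_cellUnion] at hcut
  set d := |G.edgeDensity A B - ⨍ p in cellUnion A ×ˢ cellUnion B, W p.1 p.2|
  have hvol : 1 ≤ a ^ 2 * (#A * #B / n ^ 2 : ℝ) := by
    rw [mul_div_assoc', one_le_div (by positivity)]
    calc (n : ℝ) ^ 2 = n * n := sq _
      _ ≤ (a * #A) * (a * #B) :=
        mul_le_mul hA hB n.cast_nonneg (n.cast_nonneg.trans hA)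
      _ = a ^ 2 * (#A * #B) := by ring
  calc d ≤ a ^ 2 * (#A * #B / n ^ 2) * d := le_mul_of_one_le_left (abs_nonneg _) hvol
    _ = a ^ 2 * (#A * #B / n ^ 2 * d) := mul_assoc _ _ _
    _ ≤ a ^ 2 * δ := mul_le_mul_of_nonneg_left hcut (sq_nonneg a)

end GraphonOfGraph

section StepGraphon

lemma condExpPart_eq_setAverage {k : ℕ} {P : Fin k → Set ℝ}
    (hP : Pairwise (Function.onFun Disjoint P)) (W : ℝ → ℝ → ℝ) {i j : Fin k}
    {x y : ℝ} (hx : x ∈ P i) (hy : y ∈ P j) :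
    condExpPart P W x y = ⨍ p in P i ×ˢ P j, W p.1 p.2 := by
  have hne : ∀ {z i' j'}, z ∈ P i' → j' ≠ i' → z ∉ P j' := fun hz h hz' =>
    Set.disjoint_left.1 (hP h) hz' hz
  rw [condExpPart, Finset.sum_eq_single_of_mem i (Finset.mem_univ i),
    Finset.sum_eq_single_of_mem j (Finset.mem_univ j), if_pos ⟨hx, hy⟩]
  · exact fun j' _ h => if_neg fun hmem => hne hy h hmem.2
  · exact fun i' _ h => Finset.sum_eq_zero fun _ _ => if_neg fun hmem => hne hx h hmem.1

lemma graphonEnt_condExpPart_block {n k : ℕ} (hn : 0 < n) (c : Fin n → Fin k)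
    (W : ℝ → ℝ → ℝ) :
    graphonEnt (condExpPart (fun i => cellUnion (block c i)) W) =
      (∑ p : Fin n × Fin n, binEnt (⨍ z in cellUnion (block c (c p.1)) ×ˢ
        cellUnion (block c (c p.2)), W z.1 z.2)) / n ^ 2 := by
  have hdisj : Pairwise (Function.onFun Disjoint fun i => cellUnion (block c i)) := fun i j hij =>
    disjoint_cellUnion <| Finset.disjoint_left.2 fun u hu hv =>
      hij ((mem_block.1 hu).symm.trans (mem_block.1 hv))
  refine graphonEnt_eq_of_const_on_cells hn (a := fun u v => ⨍ z in cellUnion (block c (c u)) ×ˢ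
    cellUnion (block c (c v)), W z.1 z.2) fun u v x hx y hy => ?_
  exact condExpPart_eq_setAverage hdisj W ((mem_cellUnion_iff hx).2 (mem_block.2 rfl))
    ((mem_cellUnion_iff hy).2 (mem_block.2 rfl))

lemma sum_binEnt_blockDensity_le {n k : ℕ} (hn : 0 < n) {c : Fin n → Fin k} {W : ℝ → ℝ → ℝ}
    (hWm : Measurable (Function.uncurry W)) (hW01 : ∀ x y, W x y ∈ Icc (0 : ℝ) 1) {a δ : ℝ}
    (hc : ∀ i, n ≤ a * #(block c i)) {G : SimpleGraph (Fin n)}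
    (hG : dCut (graphonOfGraph G) W ≤ δ) :
    ∑ p : Fin n × Fin n, binEnt (blockDensity c G (c p.1) (c p.2)) ≤
      n ^ 2 * (graphonEnt (condExpPart (fun i => cellUnion (block c i)) W) +
        htilde (a ^ 2 * δ)) := by
  classical
  calc _ ≤ ∑ p : Fin n × Fin n, (binEnt (⨍ z in cellUnion (block c (c p.1)) ×ˢ
        cellUnion (block c (c p.2)), W z.1 z.2) + htilde (a ^ 2 * δ)) :=
        Finset.sum_le_sum fun p _ => binEnt_le_binEnt_add_htilde (blockDensity_mem_Icc c G _ _)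
          (average_mem_Icc_zero_one _ fun z => hW01 z.1 z.2)
          (abs_edgeDensity_sub_setAverage_le hn G hWm hW01 (hc _) (hc _) hG)
    _ = _ := by
        rw [graphonEnt_condExpPart_block hn, mul_add, mul_div_cancel₀ _ (by positivity)]
        simp [Finset.sum_add_distrib, sq]

lemma graphonEnt_condExpPart_block_nonneg {n k : ℕ} (hn : 0 < n) (c : Fin n → Fin k)
    {W : ℝ → ℝ → ℝ} (hW01 : ∀ x y, W x y ∈ Icc (0 : ℝ) 1) :
    0 ≤ graphonEnt (condExpPart (fun i => cellUnion (block c i)) W) := by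
  rw [graphonEnt_condExpPart_block hn]
  exact div_nonneg (Finset.sum_nonneg fun p _ => binEnt_nonneg <|
    average_mem_Icc_zero_one _ fun z => hW01 z.1 z.2) (sq_nonneg _)

end StepGraphon

lemma natCast_le_two_mul_mul_of_equipartition {n k m : ℕ} (hk : 1 ≤ k) (hkn : k ≤ n)
    (hm : m = n / k ∨ m = (n + k - 1) / k) : (n : ℝ) ≤ 2 * k * m := by
  have hdiv : n / k ≤ m := by
    rcases hm with rfl | rfl
    exacts [le_rfl, Nat.div_le_div_right (by omega)]
  have hpos : 1 ≤ n / k := Nat.div_pos hkn hk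
  have h : n ≤ 2 * k * m := calc
    n ≤ k * (n / k + 1) := (Nat.lt_mul_div_succ n hk).le
    _ ≤ k * (2 * m) := Nat.mul_le_mul_left _ (by omega)
    _ = 2 * k * m := by ring
  exact_mod_cast h

theorem stmt6_general {W : ℝ → ℝ → ℝ} (hWm : Measurable (Function.uncurry W))
    (hW01 : ∀ x y, W x y ∈ Icc (0 : ℝ) 1) {n k : ℕ} (hn : 0 < n) {a δ : ℝ} (hδ : 0 ≤ δ)
    {V : Fin k → Finset (Fin n)} (hdisj : ∀ i j, i ≠ j → Disjoint (V i) (V j))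
    (hcover : ∀ v, ∃ i, v ∈ V i) (hV : ∀ i, n ≤ a * #(V i)) :
    Real.logb 2 (NhatCut n δ W) / n ^ 2 ≤
      (1 / 2) * graphonEnt (condExpPart (fun i => cellUnion (V i)) W) +
        (1 / 2) * htilde (a ^ 2 * δ) + 2 * k ^ 2 * Real.logb 2 n / n ^ 2 := by
  classical
  have : NeZero n := ⟨hn.ne'⟩
  obtain ⟨c, rfl⟩ := exists_eq_block hdisj hcover
  set E := graphonEnt (condExpPart (fun i => cellUnion (block c i)) W)
  have hE : 0 ≤ E := graphonEnt_condExpPart_block_nonneg hn c hW01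
  have hh : 0 ≤ htilde (a ^ 2 * δ) := htilde_nonneg (by positivity)
  have hcard : NhatCut n δ W = #{G : SimpleGraph (Fin n) | dCut (graphonOfGraph G) W ≤ δ} := by
    rw [NhatCut, Nat.card_eq_fintype_card, Fintype.card_subtype]
  have hlog := logb_card_le_of_sum_binEnt_blockDensity_le
    (s := {G | dCut (graphonOfGraph G) W ≤ δ}) c
    (B := n ^ 2 * (E + htilde (a ^ 2 * δ))) (by positivity) fun G hG =>
      sum_binEnt_blockDensity_le hn hWm hW01 hV (Finset.mem_filter.1 hG).2
  rw [← hcard, Fintype.card_fin, Fintype.card_fin] at hlog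
  calc Real.logb 2 (NhatCut n δ W) / n ^ 2
      ≤ ((1 / 2) * (n ^ 2 * (E + htilde (a ^ 2 * δ))) + 2 * k ^ 2 * Real.logb 2 n) / n ^ 2 := by
        gcongr
    _ = _ := by field_simp

/-- Lemma 4.5: for an equipartition `P` of `{1,…,n}` into `k` parts,
`log₂ N̂_□(n,δ;W) / n² ≤ ½ Ent(E[W|P]) + ½ h̃(4k²δ) + 2k² log₂ n / n²`. -/
theorem stmt6 (W : ℝ → ℝ → ℝ) (hW : IsGraphon W) (n k : ℕ) (hk : 1 ≤ k) (hkn : k ≤ n)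
    (δ : ℝ) (hδ : 0 < δ) (V : Fin k → Finset (Fin n))
    (hdisj : ∀ i j, i ≠ j → Disjoint (V i) (V j))
    (hcover : ∀ v, ∃ i, v ∈ V i)
    (hsize : ∀ i, (V i).card = n / k ∨ (V i).card = (n + k - 1) / k) :
    Real.logb 2 (NhatCut n δ W : ℝ) / ((n : ℝ)^2) ≤
      (1/2) * graphonEnt (condExpPart
          (fun i : Fin k => ⋃ j ∈ V i, Set.Ioc (((j:ℕ):ℝ)/n) ((((j:ℕ):ℝ)+1)/n)) W) +
        (1/2) * htilde (4 * (k:ℝ)^2 * δ) + 2 * (k:ℝ)^2 * Real.logb 2 (n : ℝ) / ((n : ℝ)^2) := by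
  rw [show 4 * (k : ℝ) ^ 2 = (2 * k) ^ 2 by ring]
  exact stmt6_general hW.2.1 hW.2.2 (hk.trans hkn) hδ.le hdisj hcover fun i =>
    natCast_le_two_mul_mul_of_equipartition hk hkn (hsize i)

end
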